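/- Let P ∈ ℝ^{n×n} be an irreducible row-stochastic matrix reversible with respect to θ. Then there exist a θ-mean-zero f ∈ ℝⁿ with ‖f‖_θ = 1 and g ∈ ℝⁿ with (I − P)g = f such that ν(f, P) = 2⟨g, f⟩_θ − 1 ≥ 1 − 2θ₁; i.e., the worst-case asymptotic variance satisfies sup_f ν(f, P) ≥ 1 − 2θ₁. Moreover, if ν(f, P) ≤ 1 − 2θ₁ for every θ-mean-zero f with ‖f‖_θ = 1 (so the lower bound is attained), then the second largest eigenvalue λ₂ = sup{ ⟨Px, x⟩_θ : ⟨x, 𝟙⟩_θ = 0, ‖x‖_θ = 1 } equals −θ₁/(1−θ₁). -/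

import Mathlib

open Matrix

/-! Let `E(x, y) = ⟨x, (I - P) y⟩_θ` be the Dirichlet form of the chain; it is symmetric by
reversibility and positive semidefinite. If `(I - P) g = f`, then `E(f, g) = ‖f‖_θ²` and
`E(g, g) = ⟨g, f⟩_θ`, so Cauchy–Schwarz for `E` gives `‖f‖_θ⁴ ≤ ⟨g, f⟩_θ E(f, f)`. The indicator of
a state `k`, centred and normalized, satisfies `E(f, f) = (1 - P k k) / (1 - θ k) ≤ 1 / (1 - θ k)`,
hence `⟨g, f⟩_θ ≥ 1 - θ k`. Conversely, if `⟨g, f⟩_θ ≤ 1 - θ k` for every normalized mean-zero `f`,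
then `E(f, f) ≥ 1 / (1 - θ k)`, that is, `⟨P f, f⟩_θ ≤ -θ k / (1 - θ k)`, with equality at the
normalized centred indicator. -/

section WeightedInner

variable {ι R : Type*} [Fintype ι] [CommRing R]

/-- The inner product `⟨x, y⟩_θ = ∑ i, x i * y i * θ i`, as a bilinear form. -/
def weightedInner (θ : ι → R) : LinearMap.BilinForm R (ι → R) :=
  LinearMap.mk₂ R (fun x y => ∑ i, x i * y i * θ i)
    (fun x x' y => by simp only [Pi.add_apply, add_mul, Finset.sum_add_distrib])
    (fun c x y => by simp only [Pi.smul_apply, smul_eq_mul, mul_assoc, Finset.mul_sum])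
    (fun x y y' => by simp only [Pi.add_apply, mul_add, add_mul, Finset.sum_add_distrib])
    (fun c x y => by
      simp only [Pi.smul_apply, smul_eq_mul, mul_assoc, mul_left_comm, Finset.mul_sum])

lemma weightedInner_apply (θ x y : ι → R) : weightedInner θ x y = ∑ i, x i * y i * θ i := rfl

lemma weightedInner_comm (θ x y : ι → R) : weightedInner θ x y = weightedInner θ y x := by
  simp only [weightedInner_apply, mul_comm (x _)]

lemma weightedInner_one_left (θ x : ι → R) : weightedInner θ 1 x = x ⬝ᵥ θ := by
  simp only [weightedInner_apply, Pi.one_apply, one_mul, dotProduct]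

lemma mulVec_dotProduct_of_vecMul_eq {θ : ι → R} {P : Matrix ι ι R} (hθP : θ ᵥ* P = θ)
    (x : ι → R) : (P *ᵥ x) ⬝ᵥ θ = x ⬝ᵥ θ := by
  rw [dotProduct_comm, dotProduct_mulVec, hθP, dotProduct_comm]

end WeightedInner

section Reversible

variable {ι R : Type*} [CommRing R] {θ : ι → R} {P : Matrix ι ι R}

/-- Reversibility of `P` with respect to `θ`, i.e. the detailed balance equations. -/
def IsReversible (θ : ι → R) (P : Matrix ι ι R) : Prop :=
  ∀ i j, θ i * P i j = θ j * P j i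

variable [Fintype ι]

lemma IsReversible.vecMul_eq (h : IsReversible θ P) (hP : P *ᵥ 1 = 1) : θ ᵥ* P = θ := by
  ext j
  calc (θ ᵥ* P) j = θ j * (P *ᵥ 1) j := by
        simp only [vecMul, mulVec, dotProduct, h _ j, Pi.one_apply, mul_one, Finset.mul_sum]
    _ = θ j := by rw [hP, Pi.one_apply, mul_one]

lemma IsReversible.weightedInner_mulVec_left (h : IsReversible θ P) (x y : ι → R) :
    weightedInner θ (P *ᵥ x) y = weightedInner θ x (P *ᵥ y) := by
  simp only [weightedInner_apply, mulVec, dotProduct, Finset.sum_mul, Finset.mul_sum]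
  rw [Finset.sum_comm]
  refine Finset.sum_congr rfl fun i _ => Finset.sum_congr rfl fun j _ => ?_
  linear_combination x i * y j * h j i

end Reversible

section DirichletForm

variable {ι R : Type*} [Fintype ι] [DecidableEq ι] [CommRing R] {θ : ι → R} {P : Matrix ι ι R}

/-- The Dirichlet form `E(x, y) = ⟨x, (I - P) y⟩_θ` of the chain `P`. -/
def dirichletForm (θ : ι → R) (P : Matrix ι ι R) : LinearMap.BilinForm R (ι → R) :=
  (weightedInner θ).compl₂ (1 - P).mulVecLin

lemma dirichletForm_apply (θ : ι → R) (P : Matrix ι ι R) (x y : ι → R) :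
    dirichletForm θ P x y = weightedInner θ x ((1 - P) *ᵥ y) := rfl

lemma dirichletForm_apply_eq_sub (θ : ι → R) (P : Matrix ι ι R) (x y : ι → R) :
    dirichletForm θ P x y = weightedInner θ x y - weightedInner θ x (P *ᵥ y) := by
  rw [dirichletForm_apply, sub_mulVec, one_mulVec, map_sub]

lemma weightedInner_mulVec_self (θ : ι → R) (P : Matrix ι ι R) (x : ι → R) :
    weightedInner θ (P *ᵥ x) x = weightedInner θ x x - dirichletForm θ P x x := by
  rw [dirichletForm_apply_eq_sub, weightedInner_comm θ (P *ᵥ x), sub_sub_cancel]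

lemma IsReversible.dirichletForm_isSymm (h : IsReversible θ P) : (dirichletForm θ P).IsSymm where
  eq x y := by
    rw [dirichletForm_apply_eq_sub, dirichletForm_apply_eq_sub,
      ← h.weightedInner_mulVec_left, weightedInner_comm θ x, weightedInner_comm θ _ y]

lemma dirichletForm_one_right (hP : P *ᵥ 1 = 1) (x : ι → R) : dirichletForm θ P x 1 = 0 := by
  rw [dirichletForm_apply_eq_sub, hP, sub_self]

lemma dirichletForm_one_left (hθP : θ ᵥ* P = θ) (x : ι → R) : dirichletForm θ P 1 x = 0 := by
  rw [dirichletForm_apply_eq_sub, weightedInner_one_left, weightedInner_one_left,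
    mulVec_dotProduct_of_vecMul_eq hθP, sub_self]

lemma two_mul_dirichletForm_self (hP : P *ᵥ 1 = 1) (hθP : θ ᵥ* P = θ) (x : ι → R) :
    2 * dirichletForm θ P x x = ∑ i, ∑ j, θ i * P i j * (x i - x j) ^ 2 := by
  have row_term : ∑ i, ∑ j, θ i * P i j * x i ^ 2 = weightedInner θ x x := by
    simp only [weightedInner_apply, ← Finset.sum_mul, ← Finset.mul_sum]
    refine Finset.sum_congr rfl fun i _ => ?_
    have row_sum : ∑ j, P i j = 1 := by simpa [mulVec, dotProduct] using congrFun hP i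
    rw [row_sum]
    ring
  have column_term : ∑ i, ∑ j, θ i * P i j * x j ^ 2 = weightedInner θ x x := by
    rw [Finset.sum_comm]
    simp only [weightedInner_apply, ← Finset.sum_mul]
    refine Finset.sum_congr rfl fun j _ => ?_
    have column_sum : ∑ i, θ i * P i j = θ j := congrFun hθP j
    rw [column_sum]
    ring
  have cross_term : ∑ i, ∑ j, θ i * P i j * (x i * x j) = weightedInner θ x (P *ᵥ x) := by
    simp only [weightedInner_apply, mulVec, dotProduct, Finset.mul_sum, Finset.sum_mul]
    exact Finset.sum_congr rfl fun i _ => Finset.sum_congr rfl fun j _ => by ring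
  calc 2 * dirichletForm θ P x x
      = ∑ i, ∑ j, θ i * P i j * x i ^ 2 + ∑ i, ∑ j, θ i * P i j * x j ^ 2
          - 2 * ∑ i, ∑ j, θ i * P i j * (x i * x j) := by
        rw [dirichletForm_apply_eq_sub, row_term, column_term, cross_term]
        ring
    _ = ∑ i, ∑ j, θ i * P i j * (x i - x j) ^ 2 := by
        simp only [Finset.mul_sum, ← Finset.sum_add_distrib, ← Finset.sum_sub_distrib]
        exact Finset.sum_congr rfl fun i _ => Finset.sum_congr rfl fun j _ => by ring

variable [LinearOrder R] [IsStrictOrderedRing R]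

lemma dirichletForm_self_nonneg (hθ : 0 ≤ θ) (hP : P ∈ rowStochastic R ι) (hθP : θ ᵥ* P = θ)
    (x : ι → R) : 0 ≤ dirichletForm θ P x x := by
  refine nonneg_of_mul_nonneg_right (a := 2) ?_ two_pos
  rw [two_mul_dirichletForm_self hP.2 hθP]
  exact Finset.sum_nonneg fun i _ => Finset.sum_nonneg fun j _ =>
    mul_nonneg (mul_nonneg (hθ i) (hP.1 i j)) (sq_nonneg _)

lemma sq_weightedInner_self_le_mul_dirichletForm (hθ : 0 ≤ θ) (hP : P ∈ rowStochastic R ι)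
    (hrev : IsReversible θ P) {f g : ι → R} (hg : (1 - P) *ᵥ g = f) :
    weightedInner θ f f ^ 2 ≤ weightedInner θ g f * dirichletForm θ P f f := by
  have cauchy_schwarz := LinearMap.BilinForm.apply_sq_le_of_symm (dirichletForm θ P)
    (dirichletForm_self_nonneg hθ hP (hrev.vecMul_eq hP.2))
    (LinearMap.BilinForm.isSymm_iff.1 hrev.dirichletForm_isSymm) f g
  rwa [dirichletForm_apply θ P f g, dirichletForm_apply θ P g g, hg, mul_comm] at cauchy_schwarz

lemma weightedInner_nonneg_of_one_sub_mulVec_eq (hθ : 0 ≤ θ) (hP : P ∈ rowStochastic R ι)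
    (hθP : θ ᵥ* P = θ) {f g : ι → R} (hg : (1 - P) *ᵥ g = f) : 0 ≤ weightedInner θ g f := by
  rw [← hg, ← dirichletForm_apply]
  exact dirichletForm_self_nonneg hθ hP hθP g

end DirichletForm

section VarianceEnergyDuality

variable {ι K : Type*} [Fintype ι] [DecidableEq ι] [Field K] [LinearOrder K]
  [IsStrictOrderedRing K] {θ : ι → K} {P : Matrix ι ι K}

lemma le_weightedInner_of_dirichletForm_le {c : K} (hc : 0 < c) (hθ : 0 ≤ θ)
    (hP : P ∈ rowStochastic K ι) (hrev : IsReversible θ P) {f g : ι → K}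
    (hg : (1 - P) *ᵥ g = f) (hf : weightedInner θ f f = 1)
    (hE : dirichletForm θ P f f ≤ 1 / c) : c ≤ weightedInner θ g f := by
  have variance_nonneg :=
    weightedInner_nonneg_of_one_sub_mulVec_eq hθ hP (hrev.vecMul_eq hP.2) hg
  have one_le : 1 ≤ weightedInner θ g f * (1 / c) :=
    calc 1 = weightedInner θ f f ^ 2 := by rw [hf, one_pow]
      _ ≤ weightedInner θ g f * dirichletForm θ P f f :=
        sq_weightedInner_self_le_mul_dirichletForm hθ hP hrev hg
      _ ≤ weightedInner θ g f * (1 / c) := by gcongr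
  rwa [mul_one_div, one_le_div hc] at one_le

lemma one_div_le_dirichletForm_of_weightedInner_le {c : K} (hc : 0 < c) (hθ : 0 ≤ θ)
    (hP : P ∈ rowStochastic K ι) (hrev : IsReversible θ P) {f g : ι → K}
    (hg : (1 - P) *ᵥ g = f) (hf : weightedInner θ f f = 1) (hgf : weightedInner θ g f ≤ c) :
    1 / c ≤ dirichletForm θ P f f := by
  have energy_nonneg := dirichletForm_self_nonneg hθ hP (hrev.vecMul_eq hP.2) f
  rw [div_le_iff₀' hc]
  calc 1 = weightedInner θ f f ^ 2 := by rw [hf, one_pow]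
    _ ≤ weightedInner θ g f * dirichletForm θ P f f :=
      sq_weightedInner_self_le_mul_dirichletForm hθ hP hrev hg
    _ ≤ c * dirichletForm θ P f f := by gcongr

end VarianceEnergyDuality

section PoissonEquation

variable {ι : Type*} [Fintype ι] [DecidableEq ι]

-- Maximum principle: at a maximum `i` of `v`, the value `v i` is a `(P ^ m) i`-average of `v`.
lemma eq_of_mulVec_eq_self_of_isIrreducible {R : Type*} [CommRing R] [LinearOrder R]
    [IsStrictOrderedRing R] {P : Matrix ι ι R} (hP : P ∈ rowStochastic R ι)
    (hirr : P.IsIrreducible) {v : ι → R} (hv : P *ᵥ v = v) (i j : ι) : v i = v j := by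
  have : Nonempty ι := ⟨i⟩
  obtain ⟨k, hk⟩ := Finite.exists_max v
  suffices eq_max : ∀ l, v l = v k from (eq_max i).trans (eq_max j).symm
  intro l
  obtain ⟨m, -, hm⟩ := (isIrreducible_iff_exists_pow_pos hP.1).1 hirr k l
  have hPm : P ^ m ∈ rowStochastic R ι := pow_mem hP m
  have pow_mulVec (m : ℕ) : P ^ m *ᵥ v = v := by
    induction m with
    | zero => rw [pow_zero, one_mulVec]
    | succ m ih => rw [pow_succ, ← mulVec_mulVec, hv, ih]
  have average_gap : ∑ a, (P ^ m) k a * (v k - v a) = 0 := by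
    have average : ∑ a, (P ^ m) k a * v a = v k := congrFun (pow_mulVec m) k
    simp only [mul_sub, Finset.sum_sub_distrib, ← Finset.sum_mul, average,
      sum_row_of_mem_rowStochastic hPm, one_mul, sub_self]
  have gap_eq_zero := (Finset.sum_eq_zero_iff_of_nonneg fun a _ =>
    mul_nonneg (hPm.1 k a) (sub_nonneg.2 (hk a))).1 average_gap l (Finset.mem_univ l)
  exact (sub_eq_zero.1 ((mul_eq_zero.1 gap_eq_zero).resolve_left hm.ne')).symm

variable {K : Type*} [Field K] [LinearOrder K] [IsStrictOrderedRing K] {θ : ι → K}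
  {P : Matrix ι ι K}

lemma finrank_ker_one_sub_le_one (hP : P ∈ rowStochastic K ι) (hirr : P.IsIrreducible) :
    Module.finrank K (1 - P).mulVecLin.ker ≤ 1 := by
  have one_mem : (1 : ι → K) ∈ (1 - P).mulVecLin.ker := by
    rw [LinearMap.mem_ker, mulVecLin_apply, sub_mulVec, one_mulVec, hP.2, sub_self]
  refine finrank_le_one ⟨1, one_mem⟩ fun ⟨v, hv⟩ => ?_
  have hPv : P *ᵥ v = v := by
    rw [LinearMap.mem_ker, mulVecLin_apply, sub_mulVec, one_mulVec, sub_eq_zero] at hv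
    exact hv.symm
  rcases isEmpty_or_nonempty ι with _ | ⟨⟨i⟩⟩
  · exact ⟨0, Subsingleton.elim _ _⟩
  · refine ⟨v i, Subtype.ext (funext fun j => ?_)⟩
    simpa using eq_of_mulVec_eq_self_of_isIrreducible hP hirr hPv i j

-- `range (I - P)` lies in the hyperplane of mean-zero vectors, and its codimension is at most one.
lemma exists_one_sub_mulVec_eq_iff (hθ : θ ≠ 0) (hP : P ∈ rowStochastic K ι)
    (hirr : P.IsIrreducible) (hθP : θ ᵥ* P = θ) {f : ι → K} :
    (∃ g, (1 - P) *ᵥ g = f) ↔ f ⬝ᵥ θ = 0 := by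
  let mean : Module.Dual K (ι → K) := dotProductEquiv K ι θ
  have mean_apply (x : ι → K) : mean x = x ⬝ᵥ θ := dotProduct_comm θ x
  have mean_ne_zero : mean ≠ 0 := (dotProductEquiv K ι).map_ne_zero_iff.2 hθ
  have range_le : (1 - P).mulVecLin.range ≤ mean.ker := by
    rintro _ ⟨g, rfl⟩
    rw [LinearMap.mem_ker, mean_apply, mulVecLin_apply, sub_mulVec, one_mulVec, sub_dotProduct,
      mulVec_dotProduct_of_vecMul_eq hθP, sub_self]
  have finrank_le : Module.finrank K mean.ker ≤ Module.finrank K (1 - P).mulVecLin.range := by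
    have rank_nullity := (1 - P).mulVecLin.finrank_range_add_finrank_ker
    have hyperplane := Module.Dual.finrank_ker_add_one_of_ne_zero mean_ne_zero
    have kernel := finrank_ker_one_sub_le_one hP hirr
    lia
  rw [← mean_apply, ← LinearMap.mem_ker, ← Submodule.eq_of_le_of_finrank_le range_le finrank_le]
  rfl

end PoissonEquation

section CenteredIndicator

variable {ι R : Type*} [Fintype ι] [DecidableEq ι] [CommRing R] {θ : ι → R} {P : Matrix ι ι R}

/-- The indicator of the state `k` minus its mean `θ k`; the test function for the lower bound. -/
def centeredIndicator (θ : ι → R) (k : ι) : ι → R := Pi.single k 1 - θ k • 1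

lemma centeredIndicator_dotProduct (hsum : ∑ i, θ i = 1) (k : ι) :
    centeredIndicator θ k ⬝ᵥ θ = 0 := by
  rw [centeredIndicator, sub_dotProduct, single_dotProduct, smul_dotProduct, one_dotProduct, hsum,
    smul_eq_mul, one_mul, mul_one, sub_self]

lemma weightedInner_centeredIndicator_self (hsum : ∑ i, θ i = 1) (k : ι) :
    weightedInner θ (centeredIndicator θ k) (centeredIndicator θ k) = θ k * (1 - θ k) := by
  have inner_single (x : ι → R) : weightedInner θ (Pi.single k 1) x = x k * θ k := by
    simp [weightedInner_apply, Pi.single_apply]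
  calc weightedInner θ (centeredIndicator θ k) (centeredIndicator θ k)
      = weightedInner θ (Pi.single k 1) (centeredIndicator θ k) := by
        conv_lhs => enter [1, 2]; rw [centeredIndicator]
        rw [map_sub, map_smul, LinearMap.sub_apply, LinearMap.smul_apply, weightedInner_one_left,
          centeredIndicator_dotProduct hsum, smul_zero, sub_zero]
    _ = θ k * (1 - θ k) := by
        rw [inner_single]
        simp [centeredIndicator, mul_comm]

lemma dirichletForm_centeredIndicator_self (hP : P *ᵥ 1 = 1) (hθP : θ ᵥ* P = θ) (k : ι) :
    dirichletForm θ P (centeredIndicator θ k) (centeredIndicator θ k) = θ k * (1 - P k k) := by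
  calc dirichletForm θ P (centeredIndicator θ k) (centeredIndicator θ k)
      = dirichletForm θ P (Pi.single k 1) (Pi.single k 1) := by
        simp only [centeredIndicator, map_sub, map_smul, LinearMap.sub_apply, LinearMap.smul_apply,
          dirichletForm_one_right hP, dirichletForm_one_left hθP, smul_zero, sub_zero]
    _ = θ k * (1 - P k k) := by
        simp [dirichletForm_apply, weightedInner_apply, Pi.single_apply, mul_comm]

end CenteredIndicator

lemma apply_lt_sum_of_pos {ι R : Type*} [Fintype ι] [Nontrivial ι] [AddCommMonoid R]
    [PartialOrder R] [IsOrderedCancelAddMonoid R] {θ : ι → R} (hθ : ∀ i, 0 < θ i) (k : ι) :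
    θ k < ∑ i, θ i := by
  obtain ⟨j, hj⟩ := exists_ne k
  exact Finset.single_lt_sum hj (Finset.mem_univ k) (Finset.mem_univ j) (hθ j)
    fun i _ _ => (hθ i).le

section LowerBound

variable {ι : Type*} [Fintype ι] {θ : ι → ℝ} {P : Matrix ι ι ℝ}

/-- The set `{⟨P x, x⟩_θ : ⟨x, 𝟙⟩_θ = 0, ‖x‖_θ = 1}`, whose supremum is the second largest
eigenvalue of a reversible chain. -/
def meanZeroRayleighValues (θ : ι → ℝ) (P : Matrix ι ι ℝ) : Set ℝ :=
  {r | ∃ x, x ⬝ᵥ θ = 0 ∧ weightedInner θ x x = 1 ∧ r = weightedInner θ (P *ᵥ x) x}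

variable [DecidableEq ι]

lemma exists_normalized_dirichletForm_le {k : ι} (hk : 0 < θ k) (hk1 : θ k < 1)
    (hsum : ∑ i, θ i = 1) (hP : P ∈ rowStochastic ℝ ι) (hθP : θ ᵥ* P = θ) :
    ∃ f, f ⬝ᵥ θ = 0 ∧ weightedInner θ f f = 1 ∧ dirichletForm θ P f f ≤ 1 / (1 - θ k) := by
  have hk_compl : 0 < 1 - θ k := sub_pos.2 hk1
  have norm_sq_pos : 0 < θ k * (1 - θ k) := mul_pos hk hk_compl
  have inv_sqrt_mul_self : (√(θ k * (1 - θ k)))⁻¹ * (√(θ k * (1 - θ k)))⁻¹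
      = (θ k * (1 - θ k))⁻¹ := by
    rw [← mul_inv, Real.mul_self_sqrt norm_sq_pos.le]
  refine ⟨(√(θ k * (1 - θ k)))⁻¹ • centeredIndicator θ k, ?_, ?_, ?_⟩
  · rw [smul_dotProduct, centeredIndicator_dotProduct hsum, smul_zero]
  · rw [LinearMap.map_smul₂, map_smul, smul_smul, inv_sqrt_mul_self,
      weightedInner_centeredIndicator_self hsum, smul_eq_mul, inv_mul_cancel₀ norm_sq_pos.ne']
  · rw [LinearMap.map_smul₂, map_smul, smul_smul, inv_sqrt_mul_self,
      dirichletForm_centeredIndicator_self hP.2 hθP, smul_eq_mul]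
    calc (θ k * (1 - θ k))⁻¹ * (θ k * (1 - P k k)) = (1 - P k k) / (1 - θ k) := by field_simp
      _ ≤ 1 / (1 - θ k) := by
        gcongr
        exact sub_le_self 1 (hP.1 k k)

theorem reversible_asymptotic_variance_lower_bound_general [Nontrivial ι] (hθ : ∀ i, 0 < θ i)
    (hsum : ∑ i, θ i = 1) (hP : P ∈ rowStochastic ℝ ι) (hrev : IsReversible θ P)
    (hirr : P.IsIrreducible) (k : ι) :
    (∃ f g, f ⬝ᵥ θ = 0 ∧ weightedInner θ f f = 1 ∧ (1 - P) *ᵥ g = f ∧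
      1 - 2 * θ k ≤ 2 * weightedInner θ g f - 1) ∧
    ((∀ f g, f ⬝ᵥ θ = 0 → weightedInner θ f f = 1 → (1 - P) *ᵥ g = f →
        2 * weightedInner θ g f - 1 ≤ 1 - 2 * θ k) →
      IsGreatest (meanZeroRayleighValues θ P) (-(θ k / (1 - θ k)))) := by
  have hk1 : θ k < 1 := hsum ▸ apply_lt_sum_of_pos hθ k
  have hk_compl : 0 < 1 - θ k := sub_pos.2 hk1
  have hθ0 : 0 ≤ θ := fun i => (hθ i).le
  have hθP := hrev.vecMul_eq hP.2
  have θ_ne_zero : θ ≠ 0 := fun h => (hθ k).ne' (congrFun h k)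
  have solvable {f : ι → ℝ} (hf : f ⬝ᵥ θ = 0) : ∃ g, (1 - P) *ᵥ g = f :=
    (exists_one_sub_mulVec_eq_iff θ_ne_zero hP hirr hθP).2 hf
  have value_eq : -(θ k / (1 - θ k)) = 1 - 1 / (1 - θ k) := by field_simp; ring
  obtain ⟨f, hf0, hf1, hfE⟩ := exists_normalized_dirichletForm_le (hθ k) hk1 hsum hP hθP
  refine ⟨?_, fun hub => ?_⟩
  · obtain ⟨g, hg⟩ := solvable hf0
    have := le_weightedInner_of_dirichletForm_le hk_compl hθ0 hP hrev hg hf1 hfE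
    exact ⟨f, g, hf0, hf1, hg, by linarith⟩
  · have energy_ge {x : ι → ℝ} (hx0 : x ⬝ᵥ θ = 0) (hx1 : weightedInner θ x x = 1) :
        1 / (1 - θ k) ≤ dirichletForm θ P x x := by
      obtain ⟨g, hg⟩ := solvable hx0
      exact one_div_le_dirichletForm_of_weightedInner_le hk_compl hθ0 hP hrev hg hx1
        (by linarith [hub x g hx0 hx1 hg])
    rw [value_eq]
    refine ⟨⟨f, hf0, hf1, ?_⟩, ?_⟩
    · rw [weightedInner_mulVec_self, hf1, hfE.antisymm (energy_ge hf0 hf1)]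
    · rintro _ ⟨x, hx0, hx1, rfl⟩
      rw [weightedInner_mulVec_self, hx1]
      exact sub_le_sub_left (energy_ge hx0 hx1) 1

end LowerBound

/-- **Lower bound `1 − 2θ₁` on the worst-case asymptotic variance of reversible chains.**
Let `θ` be a probability vector on `n + 2 ≥ 2` states (positive, nondecreasing) and let
`P` be an irreducible row-stochastic matrix reversible w.r.t. `θ`. Then there exist a
`θ`-mean-zero `f` with `‖f‖_θ = 1` and `g` with `(I − P) g = f` such that
`ν(f, P) = 2⟨g, f⟩_θ − 1 ≥ 1 − 2θ₁`. Moreover, if `ν(f, P) ≤ 1 − 2θ₁` for every such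
normalized mean-zero `f` (so the lower bound is attained), then the second largest
eigenvalue `λ₂ = sup { ⟨Px, x⟩_θ : ⟨x,𝟙⟩_θ = 0, ‖x‖_θ = 1 }` equals `−θ₁/(1−θ₁)`. -/
theorem reversible_asymptotic_variance_lower_bound
    (n : ℕ) (θ : Fin (n + 2) → ℝ)
    (hθ1 : 0 < θ 0) (hmono : Monotone θ) (hsum : ∑ i, θ i = 1)
    (P : Matrix (Fin (n + 2)) (Fin (n + 2)) ℝ)
    (hnonneg : ∀ i j, 0 ≤ P i j) (hrow : ∀ i, ∑ j, P i j = 1)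
    (hrev : ∀ i j, θ i * P i j = θ j * P j i)
    (hirr : ∀ i j, ∃ m : ℕ, 1 ≤ m ∧ 0 < (P ^ m) i j) :
    (∃ f g : Fin (n + 2) → ℝ,
      (∑ i, f i * θ i) = 0 ∧ (∑ i, f i * f i * θ i) = 1 ∧
      ((1 : Matrix (Fin (n + 2)) (Fin (n + 2)) ℝ) - P).mulVec g = f ∧
      1 - 2 * θ 0 ≤ 2 * (∑ i, g i * f i * θ i) - 1) ∧
    ((∀ f g : Fin (n + 2) → ℝ,
        (∑ i, f i * θ i) = 0 → (∑ i, f i * f i * θ i) = 1 →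
        ((1 : Matrix (Fin (n + 2)) (Fin (n + 2)) ℝ) - P).mulVec g = f →
        2 * (∑ i, g i * f i * θ i) - 1 ≤ 1 - 2 * θ 0) →
      sSup {r : ℝ | ∃ x : Fin (n + 2) → ℝ,
        (∑ i, x i * θ i) = 0 ∧ (∑ i, x i * x i * θ i) = 1 ∧
        r = ∑ i, P.mulVec x i * x i * θ i} = -(θ 0 / (1 - θ 0))) := by
  have h := reversible_asymptotic_variance_lower_bound_general
    (fun i => hθ1.trans_le (hmono (Fin.zero_le i))) hsum
    (mem_rowStochastic_iff_sum.2 ⟨hnonneg, hrow⟩) hrev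
    ((isIrreducible_iff_exists_pow_pos hnonneg).2 hirr) 0
  exact ⟨h.1, fun hub => (h.2 hub).csSup_eq⟩
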